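/- Let D be a K×K diagonal matrix and Ψ a K×K matrix such that both I - DΨᵀ and I - DΨ are invertible. Define p = c(I - DΨᵀ)^{-1} D 𝟙 and q = c(I - DΨ)^{-1} D 𝟙 for a scalar c, where 𝟙 is the all-ones vector. Then 𝟙ᵀ p = 𝟙ᵀ q; i.e., the total uplink power equals the total downlink power (uplink–downlink duality of total power). -/

import Mathlib

open Matrix

/-! By the push-through identity `(1 - A B)⁻¹ A = A (1 - B A)⁻¹`, the matrices `(1 - D Ψᵀ)⁻¹ D` and
`(1 - D Ψ)⁻¹ D` are transposes of each other when `D` is diagonal, and a matrix and its transpose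
have the same sum of entries. -/

section PushThrough

variable {m n R : Type*} [Fintype m] [DecidableEq m] [Fintype n] [DecidableEq n] [CommRing R]

theorem isUnit_one_sub_mul_comm (A : Matrix m n R) (B : Matrix n m R) :
    IsUnit (1 - A * B) ↔ IsUnit (1 - B * A) := by
  rw [isUnit_iff_isUnit_det, isUnit_iff_isUnit_det, det_one_sub_mul_comm]

theorem inv_one_sub_mul_mul (A : Matrix m n R) (B : Matrix n m R) (h : IsUnit (1 - A * B)) :
    (1 - A * B)⁻¹ * A = A * (1 - B * A)⁻¹ := by
  have hAB : IsUnit (1 - A * B).det := (isUnit_iff_isUnit_det _).mp h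
  have hBA : IsUnit (1 - B * A).det :=
    (isUnit_iff_isUnit_det _).mp ((isUnit_one_sub_mul_comm A B).mp h)
  have intertwine : A * (1 - B * A) = (1 - A * B) * A := by
    rw [Matrix.mul_sub, Matrix.sub_mul, Matrix.mul_one, Matrix.one_mul, Matrix.mul_assoc]
  calc (1 - A * B)⁻¹ * A
      = (1 - A * B)⁻¹ * (A * (1 - B * A)) * (1 - B * A)⁻¹ := by
        rw [← Matrix.mul_assoc, mul_nonsing_inv_cancel_right _ _ hBA]
    _ = A * (1 - B * A)⁻¹ := by
        rw [intertwine, nonsing_inv_mul_cancel_left _ _ hAB]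

theorem transpose_inv_one_sub_mul_mul (A : Matrix m n R) (B : Matrix n m R)
    (h : IsUnit (1 - A * B)) :
    ((1 - A * B)⁻¹ * A)ᵀ = (1 - Aᵀ * Bᵀ)⁻¹ * Aᵀ := by
  rw [inv_one_sub_mul_mul A B h, transpose_mul, transpose_nonsing_inv, transpose_sub,
    transpose_one, transpose_mul]

theorem uplink_downlink_total_power_duality_general (D Ψ : Matrix m n R) (c : R)
    (hU : IsUnit (1 - D * Ψᵀ)) (u : m → R) (v : n → R) (p : m → R) (q : n → R)
    (hp : p = c • (((1 - D * Ψᵀ)⁻¹ * D) *ᵥ v))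
    (hq : q = c • (((1 - Dᵀ * Ψ)⁻¹ * Dᵀ) *ᵥ u)) :
    u ⬝ᵥ p = v ⬝ᵥ q := by
  have gain_transpose : ((1 - D * Ψᵀ)⁻¹ * D)ᵀ = (1 - Dᵀ * Ψ)⁻¹ * Dᵀ := by
    rw [transpose_inv_one_sub_mul_mul D Ψᵀ hU, transpose_transpose]
  rw [hp, hq, ← gain_transpose, dotProduct_smul, dotProduct_smul, dotProduct_transpose_mulVec]

end PushThrough

theorem uplink_downlink_total_power_duality {K : ℕ}
    (d : Fin K → ℝ) (Ψ : Matrix (Fin K) (Fin K) ℝ) (c : ℝ)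
    (hU : IsUnit (1 - Matrix.diagonal d * Ψᵀ))
    (hD : IsUnit (1 - Matrix.diagonal d * Ψ))
    (p q : Fin K → ℝ)
    (hp : p = c • (((1 - Matrix.diagonal d * Ψᵀ)⁻¹ * Matrix.diagonal d) *ᵥ fun _ => 1))
    (hq : q = c • (((1 - Matrix.diagonal d * Ψ)⁻¹ * Matrix.diagonal d) *ᵥ fun _ => 1)) :
    (fun _ => (1 : ℝ)) ⬝ᵥ p = (fun _ => (1 : ℝ)) ⬝ᵥ q :=
  uplink_downlink_total_power_duality_general (diagonal d) Ψ c hU _ _ p q hp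
    (by rwa [diagonal_transpose])
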